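/- Let d ≥ 2, λ > 0, η ≥ 0, and let L be even. Then for every i ∈ T_L^d, μ^{+,per}_{L;λ,η}( φ_i > V^{−1}( (2d/λ) log L ) ) ≤ L^{−2d}, where V^{−1}(y) = inf{x ≥ 0 : V(x) ≥ y}. -/

import Mathlib

open MeasureTheory Filter
open scoped Classical



/-- Nearest-neighbour adjacency on the torus `T_L^d = (ℤ/Lℤ)^d`. -/
def torusAdj (d L : ℕ) (i j : Fin d → ZMod L) : Prop :=
  ∃ k : Fin d, j = Function.update i k (i k + 1) ∨ j = Function.update i k (i k - 1)

/-- The periodic Hamiltonian `H^{per}_{L;λ}(φ)`. -/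
noncomputable def HamPer (d L : ℕ) [NeZero L] (lam : ℝ) (V : ℝ → ℝ)
    (ψ : (Fin d → ZMod L) → ℝ) : ℝ :=
  (1 / (8 * d)) * ∑ i, ∑ j, (if torusAdj d L i j then (ψ i - ψ j) ^ 2 else 0)
    + lam * ∑ i, V (ψ i)

/-- The a priori measure `∏_{i ∈ T_L^d} (dφ_i + η δ₀(dφ_i))` on the torus. -/
noncomputable def priorPer (d L : ℕ) [NeZero L] (η : ℝ) : Measure ((Fin d → ZMod L) → ℝ) :=
  Measure.pi fun _ => (volume + ENNReal.ofReal η • Measure.dirac (0 : ℝ))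

/-- Density `e^{-H^{per}_{L;λ}(φ)} 𝟙_{Ω₊}(φ)`. -/
noncomputable def densPer (d L : ℕ) [NeZero L] (lam : ℝ) (V : ℝ → ℝ)
    (φ : (Fin d → ZMod L) → ℝ) : ℝ :=
  if ∀ i, 0 ≤ φ i then Real.exp (-(HamPer d L lam V φ)) else 0

/-- The unnormalized Gibbs measure with hard wall, periodic boundary condition. -/
noncomputable def gibbsPer (d L : ℕ) [NeZero L] (lam η : ℝ) (V : ℝ → ℝ) :
    Measure ((Fin d → ZMod L) → ℝ) :=
  (priorPer d L η).withDensity fun φ => ENNReal.ofReal (densPer d L lam V φ)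

/-- The partition function `Z^{+,per}_{L;λ,η}`. -/
noncomputable def ZplusPer (d L : ℕ) [NeZero L] (lam η : ℝ) (V : ℝ → ℝ) : ℝ :=
  (gibbsPer d L lam η V Set.univ).toReal

/-- The restricted partition function `Z^{+,per}_{L;λ,η}[A]`. -/
noncomputable def ZplusPerIn (d L : ℕ) [NeZero L] (lam η : ℝ) (V : ℝ → ℝ)
    (A : Set ((Fin d → ZMod L) → ℝ)) : ℝ :=
  (gibbsPer d L lam η V A).toReal

/-- The normalized Gibbs measure `μ^{+,per}_{L;λ,η}`. -/
noncomputable def muPer (d L : ℕ) [NeZero L] (lam η : ℝ) (V : ℝ → ℝ) :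
    Measure ((Fin d → ZMod L) → ℝ) :=
  (gibbsPer d L lam η V Set.univ)⁻¹ • gibbsPer d L lam η V

/-- The periodic finite-volume free energy `f^{per}_L(λ,η)`. -/
noncomputable def freeEnergyPer (d L : ℕ) [NeZero L] (lam η : ℝ) (V : ℝ → ℝ) : ℝ :=
  ((L : ℝ) ^ d)⁻¹ * Real.log (ZplusPer d L lam η V / ZplusPer d L lam 0 V)

/-- The generalized inverse `V⁻¹(y) = inf {x ≥ 0 : V(x) ≥ y}`. -/
noncomputable def Vinv (V : ℝ → ℝ) (y : ℝ) : ℝ :=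
  sInf {x : ℝ | 0 ≤ x ∧ y ≤ V x}


/-!
Reflect the even torus through a hyperplane containing no site. The interaction across the
hyperplane is Gaussian, hence (Hubbard–Stratonovich) a mixture of products of a function of one half
and its mirror image, so that Cauchy–Schwarz gives reflection positivity. Among the configurations
of single-site events, normalise the probability by the product of the single-site bounds:
by reflection positivity the symmetrizations of a maximiser are again maximisers, and
repeated symmetrization produces a constant one. This is the chessboard estimate: the probability
that one spin exceeds `h` is at most the `|T|`-th root of the probability that all spins do.

If all spins exceed `h ≥ 0`, then the field does not see the atom at `0` and can be lowered by `h`.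
This preserves the gradients and, since `V` is superadditive on `[0, ∞)`, gains a factor
`exp (-λ V h)` at each site.
-/

open scoped ENNReal NNReal

section Reflection

variable {T α : Type*} {θ : T → T} {H : Set T}

/-- The involution `θ` exchanges the half `H` of the sites with its complement. -/
structure IsHalfSwap (θ : T → T) (H : Set T) : Prop where
  involutive : Function.Involutive θ
  map_mem_iff : ∀ x, θ x ∈ H ↔ x ∉ H

/-- A reflection of the graph with edge relation `r`: a graph automorphism exchanging `H` with its
complement such that every edge leaving `H` joins a site to its mirror image, as for a reflection
of `ℤᵈ` through a hyperplane containing no site. -/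
structure IsReflection (r : T → T → Prop) (θ : T → T) (H : Set T) : Prop
    extends IsHalfSwap θ H where
  map_rel_iff : ∀ x y, r (θ x) (θ y) ↔ r x y
  eq_map_of_rel : ∀ x ∈ H, ∀ y ∉ H, r x y → y = θ x

/-- The configuration equal to `f` on `H` and to the mirror image of `f` off `H`; it is
`θ`-invariant when `θ` exchanges `H` and its complement. -/
noncomputable def symmetrize (θ : T → T) (H : Set T) (f : T → α) : T → α :=
  H.piecewise f (f ∘ θ)

lemma symmetrize_of_mem {x : T} (hx : x ∈ H) (f : T → α) : symmetrize θ H f x = f x :=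
  Set.piecewise_eq_of_mem _ _ _ hx

lemma symmetrize_of_notMem {x : T} (hx : x ∉ H) (f : T → α) : symmetrize θ H f x = f (θ x) :=
  Set.piecewise_eq_of_notMem _ _ _ hx

lemma comp_symmetrize {β : Type*} (g : α → β) (f : T → α) (x : T) :
    g (symmetrize θ H f x) = symmetrize θ H (fun y => g (f y)) x := by
  by_cases hx : x ∈ H
  · simp only [symmetrize_of_mem hx]
  · simp only [symmetrize_of_notMem hx]

lemma prod_symmetrize_mul_prod_symmetrize_compl [Fintype T] {M : Type*} [CommMonoid M]
    (hθ : Function.Involutive θ) (H : Set T) (f : T → M) :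
    (∏ x, symmetrize θ H f x) * ∏ x, symmetrize θ Hᶜ f x = (∏ x, f x) ^ 2 := by
  have hpointwise : ∀ x, symmetrize θ H f x * symmetrize θ Hᶜ f x = f x * f (θ x) := by
    intro x
    by_cases hx : x ∈ H
    · rw [symmetrize_of_mem hx, symmetrize_of_notMem (Set.notMem_compl_iff.2 hx)]
    · rw [symmetrize_of_notMem hx, symmetrize_of_mem (Set.mem_compl hx), mul_comm]
  have hmap : ∏ x, f (θ x) = ∏ x, f x := Equiv.prod_comp hθ.toPerm f
  rw [← Finset.prod_mul_distrib, Finset.prod_congr rfl fun x _ => hpointwise x,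
    Finset.prod_mul_distrib, hmap, sq]

namespace IsHalfSwap

lemma symmetrize_map (h : IsHalfSwap θ H) {x : T} (hx : x ∈ H) (f : T → α) :
    symmetrize θ H f (θ x) = f x := by
  rw [symmetrize_of_notMem (by rwa [h.map_mem_iff, not_not]), h.involutive x]

lemma symmetrize_compl_map (h : IsHalfSwap θ H) {x : T} (hx : x ∈ H) (f : T → α) :
    symmetrize θ Hᶜ f (θ x) = f (θ x) :=
  symmetrize_of_mem (by rwa [Set.mem_compl_iff, h.map_mem_iff, not_not]) f

/-- The whole set of sites as two copies of `H`, the second one reflected by `θ`. -/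
noncomputable def unfoldEquiv (h : IsHalfSwap θ H) : H ⊕ H ≃ T where
  toFun := Sum.elim (fun x => x) (fun x => θ x)
  invFun y := if hy : y ∈ H then .inl ⟨y, hy⟩ else .inr ⟨θ y, (h.map_mem_iff y).2 hy⟩
  left_inv := by
    rintro (x | x)
    · simp
    · simp [h.map_mem_iff, h.involutive x.1]
  right_inv y := by
    by_cases hy : y ∈ H
    · simp [hy]
    · simp [hy, h.involutive y]

@[to_additive]
lemma prod_eq_prod_mul_prod_map [Fintype T] (h : IsHalfSwap θ H) {M : Type*} [CommMonoid M]
    (f : T → M) : ∏ x, f x = (∏ x : H, f x) * ∏ x : H, f (θ x) := by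
  rw [← h.unfoldEquiv.prod_comp, Fintype.prod_sum_type]
  rfl

lemma measurePreserving_restrict_prod_restrict_map [Fintype T] [MeasurableSpace α]
    (h : IsHalfSwap θ H) (ν : Measure α) [SigmaFinite ν] :
    MeasurePreserving (fun φ : T → α => (fun x : H => φ x, fun x : H => φ (θ x)))
      (.pi fun _ => ν) ((Measure.pi fun _ => ν).prod (.pi fun _ => ν)) :=
  (measurePreserving_sumPiEquivProdPi fun _ : H ⊕ H => ν).comp
    (measurePreserving_piCongrLeft (fun _ : T => ν) h.unfoldEquiv).symm

end IsHalfSwap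

end Reflection

section DirichletEnergy

variable {T : Type*} [Fintype T] {r : T → T → Prop} {θ : T → T} {H : Set T}

/-- The sum of the squared increments of `φ` over the ordered pairs related by `r`, so that an
undirected edge counts twice. -/
noncomputable def dirichletEnergy (r : T → T → Prop) (φ : T → ℝ) : ℝ :=
  ∑ x, ∑ y, if r x y then (φ x - φ y) ^ 2 else 0

/-- The sites of `H` joined by an edge to their mirror image under `θ`. -/
noncomputable def crossingSites (r : T → T → Prop) (θ : T → T) (H : Set T) : Finset H :=
  {x | r x (θ x)}

lemma continuous_dirichletEnergy (r : T → T → Prop) : Continuous (dirichletEnergy r) := by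
  refine continuous_finsetSum _ fun x _ => continuous_finsetSum _ fun y _ => ?_
  split_ifs <;> fun_prop

lemma dirichletEnergy_add_const (r : T → T → Prop) (φ : T → ℝ) (h : ℝ) :
    dirichletEnergy r (φ + fun _ => h) = dirichletEnergy r φ := by
  simp only [dirichletEnergy, Pi.add_apply, add_sub_add_right_eq_sub]

namespace IsReflection

lemma rel_map_right_iff (h : IsReflection r θ H) (x y : H) :
    r x (θ y) ↔ y = x ∧ x ∈ crossingSites r θ H := by
  simp only [crossingSites, Finset.mem_filter_univ]
  refine ⟨fun hxy => ?_, by rintro ⟨rfl, hx⟩; exact hx⟩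
  have hy : θ y ∉ H := by rw [h.map_mem_iff, not_not]; exact y.2
  obtain rfl : y = x := Subtype.ext (h.involutive.injective (h.eq_map_of_rel x x.2 _ hy hxy))
  exact ⟨rfl, hxy⟩

lemma rel_map_left_iff (h : IsReflection r θ H) (x y : H) :
    r (θ x) y ↔ y = x ∧ x ∈ crossingSites r θ H := by
  rw [← h.rel_map_right_iff, ← h.map_rel_iff, h.involutive]

lemma dirichletEnergy_eq (h : IsReflection r θ H) (φ : T → ℝ) :
    dirichletEnergy r φ =
      dirichletEnergy (fun x y : H => r x y) (fun x => φ x) +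
        dirichletEnergy (fun x y : H => r x y) (fun x => φ (θ x)) +
        2 * ∑ x ∈ crossingSites r θ H, (φ x - φ (θ x)) ^ 2 := by
  have hsymm : ∑ x ∈ crossingSites r θ H, (φ (θ x) - φ x) ^ 2 =
      ∑ x ∈ crossingSites r θ H, (φ x - φ (θ x)) ^ 2 :=
    Finset.sum_congr rfl fun x _ => sub_sq_comm _ _
  simp only [dirichletEnergy, h.sum_eq_sum_add_sum_map, h.map_rel_iff, h.rel_map_right_iff,
    h.rel_map_left_iff, ite_and, Finset.sum_add_distrib, Finset.sum_ite_eq', Finset.mem_univ,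
    if_true, Finset.sum_ite_mem, Finset.univ_inter, hsymm]
  ring

end IsReflection

end DirichletEnergy

section CauchySchwarz

variable {α Ω : Type*} [MeasurableSpace α] [MeasurableSpace Ω]

lemma sq_lintegral_mul_le (μ : Measure α) {f g : α → ℝ≥0∞} (hf : AEMeasurable f μ)
    (hg : AEMeasurable g μ) :
    (∫⁻ x, f x * g x ∂μ) ^ 2 ≤ (∫⁻ x, f x * f x ∂μ) * ∫⁻ x, g x * g x ∂μ := by
  have hsqrt (y : ℝ≥0∞) : (y ^ (1 / 2 : ℝ)) ^ 2 = y := by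
    rw [← ENNReal.rpow_natCast, ← ENNReal.rpow_mul]
    norm_num
  have hHolder := pow_le_pow_left₀ zero_le
    (ENNReal.lintegral_mul_le_Lp_mul_Lq μ Real.HolderConjugate.two_two hf hg) 2
  rw [mul_pow, hsqrt, hsqrt] at hHolder
  simpa only [Pi.mul_apply, ENNReal.rpow_two, sq] using hHolder

variable {μ : Measure α} [SFinite μ] {τ : Measure Ω} [SFinite τ] {F G : α → ℝ≥0∞}
  {g : α → Ω → ℝ≥0∞}

lemma lintegral_lintegral_mul_lintegral_mul (hg : Measurable (Function.uncurry g))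
    (hF : Measurable F) (hG : Measurable G) :
    ∫⁻ u, ∫⁻ v, F u * G v * ∫⁻ t, g u t * g v t ∂τ ∂μ ∂μ =
      ∫⁻ t, (∫⁻ u, F u * g u t ∂μ) * ∫⁻ v, G v * g v t ∂μ ∂τ := by
  have hgu (u : α) : Measurable (g u) := hg.of_uncurry_left
  have hgt (t : Ω) : Measurable fun u => g u t := hg.of_uncurry_right
  have hFg : Measurable fun p : α × Ω => F p.1 * g p.1 p.2 := (hF.comp measurable_fst).mul hg
  have hGg : Measurable fun p : α × Ω => G p.1 * g p.1 p.2 := (hG.comp measurable_fst).mul hg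
  calc ∫⁻ u, ∫⁻ v, F u * G v * ∫⁻ t, g u t * g v t ∂τ ∂μ ∂μ
    _ = ∫⁻ u, ∫⁻ v, ∫⁻ t, F u * g u t * (G v * g v t) ∂τ ∂μ ∂μ := by
        refine lintegral_congr fun u => lintegral_congr fun v => ?_
        rw [← lintegral_const_mul _ ((hgu u).fun_mul (hgu v))]
        exact lintegral_congr fun t => by ring
    _ = ∫⁻ u, ∫⁻ t, F u * g u t * ∫⁻ v, G v * g v t ∂μ ∂τ ∂μ := by
        refine lintegral_congr fun u => ?_
        rw [lintegral_lintegral_swap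
          ((((hgu u).comp measurable_snd).const_mul (F u)).mul hGg).aemeasurable]
        exact lintegral_congr fun t => lintegral_const_mul _ (hG.fun_mul (hgt t))
    _ = ∫⁻ t, (∫⁻ u, F u * g u t ∂μ) * ∫⁻ v, G v * g v t ∂μ ∂τ := by
        rw [lintegral_lintegral_swap
          (hFg.mul (hGg.lintegral_prod_left'.comp measurable_snd)).aemeasurable]
        exact lintegral_congr fun t => lintegral_mul_const _ (hF.fun_mul (hgt t))

lemma sq_lintegral_lintegral_mul_lintegral_mul_le (hg : Measurable (Function.uncurry g))
    (hF : Measurable F) (hG : Measurable G) :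
    (∫⁻ u, ∫⁻ v, F u * G v * ∫⁻ t, g u t * g v t ∂τ ∂μ ∂μ) ^ 2 ≤
      (∫⁻ u, ∫⁻ v, F u * F v * ∫⁻ t, g u t * g v t ∂τ ∂μ ∂μ) *
        ∫⁻ u, ∫⁻ v, G u * G v * ∫⁻ t, g u t * g v t ∂τ ∂μ ∂μ := by
  have hmeas {K : α → ℝ≥0∞} (hK : Measurable K) : Measurable fun t => ∫⁻ u, K u * g u t ∂μ :=
    ((hK.comp measurable_fst).mul hg).lintegral_prod_left'
  simp only [lintegral_lintegral_mul_lintegral_mul hg, hF, hG]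
  exact sq_lintegral_mul_le τ (hmeas hF).aemeasurable (hmeas hG).aemeasurable

end CauchySchwarz

section GaussianKernel

open ProbabilityTheory

/-- One of the two identical factors of the Hubbard–Stratonovich representation of the Gaussian
kernel `exp (-(v / 2) * ∑ x, (a x - b x) ^ 2)`, at the value `ξ` of the auxiliary field. -/
noncomputable def gaussianFactor {ι : Type*} [Fintype ι] (v : ℝ≥0) (a ξ : ι → ℝ) : ℝ :=
  ∏ x, Real.exp (a x * ξ x - v * a x ^ 2)

lemma measurable_gaussianFactor {ι : Type*} [Fintype ι] (v : ℝ≥0) :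
    Measurable (Function.uncurry (gaussianFactor (ι := ι) v)) := by
  unfold gaussianFactor Function.uncurry
  fun_prop

lemma exp_sub_mul_exp_sub_eq (v : ℝ≥0) (a b ξ : ℝ) :
    Real.exp (a * ξ - v * a ^ 2) * Real.exp (b * ξ - v * b ^ 2) =
      Real.exp (-(v * a ^ 2 + v * b ^ 2)) * Real.exp ((a + b) * ξ) := by
  rw [← Real.exp_add, ← Real.exp_add]
  ring_nf

lemma integrable_exp_sub_mul_exp_sub (v : ℝ≥0) (a b : ℝ) :
    Integrable (fun ξ => Real.exp (a * ξ - v * a ^ 2) * Real.exp (b * ξ - v * b ^ 2))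
      (gaussianReal 0 v) := by
  simp only [exp_sub_mul_exp_sub_eq]
  exact (integrable_exp_mul_gaussianReal _).const_mul _

lemma integral_exp_sub_mul_exp_sub (v : ℝ≥0) (a b : ℝ) :
    ∫ ξ, Real.exp (a * ξ - v * a ^ 2) * Real.exp (b * ξ - v * b ^ 2) ∂gaussianReal 0 v =
      Real.exp (-(v / 2) * (a - b) ^ 2) := by
  have hmgf : ∫ ξ, Real.exp ((a + b) * ξ) ∂gaussianReal 0 v = Real.exp (v * (a + b) ^ 2 / 2) := by
    simpa [mgf] using congrFun (mgf_fun_id_gaussianReal (μ := 0) (v := v)) (a + b)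
  simp only [exp_sub_mul_exp_sub_eq]
  rw [integral_const_mul, hmgf, ← Real.exp_add]
  ring_nf

lemma lintegral_gaussianFactor_mul {ι : Type*} [Fintype ι] (v : ℝ≥0) (a b : ι → ℝ) :
    ∫⁻ ξ, ENNReal.ofReal (gaussianFactor v a ξ) * ENNReal.ofReal (gaussianFactor v b ξ)
        ∂Measure.pi (fun _ => gaussianReal 0 v) =
      ENNReal.ofReal (Real.exp (-(v / 2) * ∑ x, (a x - b x) ^ 2)) := by
  have hprod (ξ : ι → ℝ) : gaussianFactor v a ξ * gaussianFactor v b ξ =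
      ∏ x, (Real.exp (a x * ξ x - v * a x ^ 2) * Real.exp (b x * ξ x - v * b x ^ 2)) :=
    Finset.prod_mul_distrib.symm
  have hnonneg (c ξ : ι → ℝ) : 0 ≤ gaussianFactor v c ξ :=
    Finset.prod_nonneg fun _ _ => Real.exp_nonneg _
  simp only [← ENNReal.ofReal_mul (hnonneg _ _)]
  rw [← ofReal_integral_eq_lintegral_ofReal _
    (.of_forall fun ξ => mul_nonneg (hnonneg a ξ) (hnonneg b ξ))]
  · simp only [hprod]
    rw [integral_fintype_prod_eq_prod (μ := fun _ : ι => gaussianReal 0 v)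
      fun x t => Real.exp (a x * t - v * a x ^ 2) * Real.exp (b x * t - v * b x ^ 2)]
    simp only [integral_exp_sub_mul_exp_sub, ← Real.exp_sum, Finset.mul_sum]
  · simp only [hprod]
    exact Integrable.fintype_prod (μ := fun _ => gaussianReal 0 v)
      fun x => integrable_exp_sub_mul_exp_sub v (a x) (b x)

lemma sq_lintegral_lintegral_mul_gaussian_le {ι : Type*} {μ : Measure (ι → ℝ)}
    [SFinite μ] {F G : (ι → ℝ) → ℝ≥0∞} (hF : Measurable F) (hG : Measurable G) (v : ℝ≥0)
    (S : Finset ι) :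
    (∫⁻ a, ∫⁻ b, F a * G b * ENNReal.ofReal (Real.exp (-(v / 2) * ∑ x ∈ S, (a x - b x) ^ 2))
        ∂μ ∂μ) ^ 2 ≤
      (∫⁻ a, ∫⁻ b, F a * F b * ENNReal.ofReal (Real.exp (-(v / 2) * ∑ x ∈ S, (a x - b x) ^ 2))
        ∂μ ∂μ) *
      ∫⁻ a, ∫⁻ b, G a * G b * ENNReal.ofReal (Real.exp (-(v / 2) * ∑ x ∈ S, (a x - b x) ^ 2))
        ∂μ ∂μ := by
  have hkernel (a b : ι → ℝ) :
      ENNReal.ofReal (Real.exp (-(v / 2) * ∑ x ∈ S, (a x - b x) ^ 2)) =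
        ∫⁻ ξ, ENNReal.ofReal (gaussianFactor v (fun x : S => a x) ξ) *
          ENNReal.ofReal (gaussianFactor v (fun x : S => b x) ξ)
          ∂Measure.pi fun _ => gaussianReal 0 v := by
    rw [lintegral_gaussianFactor_mul, ← Finset.sum_coe_sort]
  have hmeas : Measurable (Function.uncurry fun (a : ι → ℝ) (ξ : S → ℝ) =>
      ENNReal.ofReal (gaussianFactor v (fun x : S => a x) ξ)) :=
    ((measurable_gaussianFactor v).comp
      (f := fun p : (ι → ℝ) × (S → ℝ) => (fun x : S => p.1 x, p.2)) (by fun_prop)).ennreal_ofReal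
  simp only [hkernel]
  exact sq_lintegral_lintegral_mul_lintegral_mul_le hmeas hF hG

end GaussianKernel

section ReflectionPositivity

variable {T : Type*} [Fintype T]

/-- The density of a Gaussian field with Dirichlet energy `c * dirichletEnergy r`, weighted by the
factor `f x (φ x)` at each site `x`. -/
noncomputable def siteDensity (r : T → T → Prop) (c : ℝ≥0) (f : T → ℝ → ℝ≥0∞) (φ : T → ℝ) : ℝ≥0∞ :=
  (∏ x, f x (φ x)) * ENNReal.ofReal (Real.exp (-c * dirichletEnergy r φ))

/-- The integral of `siteDensity` against the product measure `ν ^ T`: a partition function with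
one insertion per site. -/
noncomputable def siteIntegral (r : T → T → Prop) (c : ℝ≥0) (ν : Measure ℝ)
    (f : T → ℝ → ℝ≥0∞) : ℝ≥0∞ :=
  ∫⁻ φ, siteDensity r c f φ ∂Measure.pi fun _ => ν

lemma measurable_siteDensity (r : T → T → Prop) (c : ℝ≥0) {f : T → ℝ → ℝ≥0∞}
    (hf : ∀ x, Measurable (f x)) : Measurable (siteDensity r c f) := by
  have hD : Measurable (dirichletEnergy r) := (continuous_dirichletEnergy r).measurable
  unfold siteDensity
  fun_prop

lemma siteDensity_indicator (r : T → T → Prop) (c : ℝ≥0) (f : T → ℝ → ℝ≥0∞) (B : T → Set ℝ)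
    (φ : T → ℝ) :
    siteDensity r c (fun x => (B x).indicator (f x)) φ =
      (Set.univ.pi B).indicator (siteDensity r c f) φ := by
  by_cases hφ : φ ∈ Set.univ.pi B
  · simp only [Set.indicator_of_mem hφ, siteDensity, Set.indicator_of_mem (hφ _ (Set.mem_univ _))]
  · obtain ⟨x, hx⟩ : ∃ x, φ x ∉ B x := by simpa only [Set.mem_univ_pi, not_forall] using hφ
    rw [Set.indicator_of_notMem hφ, siteDensity, Finset.prod_eq_zero (Finset.mem_univ x)
      (Set.indicator_of_notMem hx _), zero_mul]

namespace IsReflection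

variable {r : T → T → Prop} {θ : T → T} {H : Set T}

lemma siteDensity_eq (h : IsReflection r θ H) (c : ℝ≥0) (f : T → ℝ → ℝ≥0∞) (φ : T → ℝ) :
    siteDensity r c f φ =
      siteDensity (fun x y : H => r x y) c (fun x => f x) (fun x => φ x) *
        siteDensity (fun x y : H => r x y) c (fun x => f (θ x)) (fun x => φ (θ x)) *
        ENNReal.ofReal
          (Real.exp (-((4 * c : ℝ≥0) / 2) *
            ∑ x ∈ crossingSites r θ H, (φ x - φ (θ x)) ^ 2)) := by
  have hexp (D₁ D₂ C : ℝ) : ENNReal.ofReal (Real.exp (-c * (D₁ + D₂ + 2 * C))) =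
      ENNReal.ofReal (Real.exp (-c * D₁)) * ENNReal.ofReal (Real.exp (-c * D₂)) *
        ENNReal.ofReal (Real.exp (-((4 * c : ℝ≥0) / 2) * C)) := by
    simp only [← ENNReal.ofReal_mul, Real.exp_nonneg, ← Real.exp_add]
    push_cast
    ring_nf
  simp only [siteDensity]
  rw [h.dirichletEnergy_eq, h.prod_eq_prod_mul_prod_map, hexp]
  ring

lemma siteIntegral_eq (h : IsReflection r θ H) (c : ℝ≥0) (ν : Measure ℝ) [SigmaFinite ν]
    {f : T → ℝ → ℝ≥0∞} (hf : ∀ x, Measurable (f x)) :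
    siteIntegral r c ν f =
      ∫⁻ u, ∫⁻ v, siteDensity (fun x y : H => r x y) c (fun x => f x) u *
          siteDensity (fun x y : H => r x y) c (fun x => f (θ x)) v *
          ENNReal.ofReal (Real.exp (-((4 * c : ℝ≥0) / 2) *
            ∑ x ∈ crossingSites r θ H, (u x - v x) ^ 2))
        ∂Measure.pi (fun _ => ν) ∂Measure.pi fun _ => ν := by
  have hu := measurable_siteDensity (fun x y : H => r x y) c fun x => hf x
  have hv := measurable_siteDensity (fun x y : H => r x y) c fun x => hf (θ x)
  have hmeas : Measurable fun p : (H → ℝ) × (H → ℝ) =>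
      siteDensity (fun x y : H => r x y) c (fun x => f x) p.1 *
        siteDensity (fun x y : H => r x y) c (fun x => f (θ x)) p.2 *
        ENNReal.ofReal (Real.exp (-((4 * c : ℝ≥0) / 2) *
          ∑ x ∈ crossingSites r θ H, (p.1 x - p.2 x) ^ 2)) := by
    fun_prop
  rw [siteIntegral, lintegral_congr (h.siteDensity_eq c f),
    (h.measurePreserving_restrict_prod_restrict_map ν).lintegral_comp hmeas,
    lintegral_prod _ hmeas.aemeasurable]

theorem sq_siteIntegral_le (h : IsReflection r θ H) (c : ℝ≥0) (ν : Measure ℝ) [SigmaFinite ν]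
    {f : T → ℝ → ℝ≥0∞} (hf : ∀ x, Measurable (f x)) :
    siteIntegral r c ν f ^ 2 ≤
      siteIntegral r c ν (symmetrize θ H f) * siteIntegral r c ν (symmetrize θ Hᶜ f) := by
  have hsymm (K : Set T) (x : T) : Measurable (symmetrize θ K f x) := by
    by_cases hx : x ∈ K
    · rw [symmetrize_of_mem hx]
      exact hf x
    · rw [symmetrize_of_notMem hx]
      exact hf (θ x)
  have hmem (x : H) : symmetrize θ H f x = f x := symmetrize_of_mem x.2 f
  have hcompl (x : H) : symmetrize θ Hᶜ f x = f (θ x) :=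
    symmetrize_of_notMem (Set.notMem_compl_iff.2 x.2) f
  rw [h.siteIntegral_eq c ν hf, h.siteIntegral_eq c ν (hsymm H), h.siteIntegral_eq c ν (hsymm Hᶜ)]
  simp only [hmem, hcompl, fun x : H => h.symmetrize_map x.2 f,
    fun x : H => h.symmetrize_compl_map x.2 f]
  exact sq_lintegral_lintegral_mul_gaussian_le
    (measurable_siteDensity (fun x y : H => r x y) c fun x => hf x)
    (measurable_siteDensity (fun x y : H => r x y) c fun x => hf (θ x)) _ _

end IsReflection

end ReflectionPositivity

section Torus

variable {d L : ℕ}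

lemma val_neg_one_sub [NeZero L] (t : ZMod L) : (-1 - t).val = L - 1 - t.val := by
  have ht := ZMod.val_lt t
  have hcast : (-1 - t : ZMod L) = ((L - 1 - t.val : ℕ) : ZMod L) := by
    rw [Nat.sub_sub, Nat.cast_sub (by omega)]
    simp
    ring
  rw [hcast, ZMod.val_cast_of_lt (by omega)]

lemma val_add_one_eq_ite [NeZero L] (t : ZMod L) :
    (t + 1).val = if t.val + 1 = L then 0 else t.val + 1 := by
  have ht := ZMod.val_lt t
  have hcast : (t + 1 : ZMod L) = ((t.val + 1 : ℕ) : ZMod L) := by simp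
  split_ifs with hL
  · rw [hcast, hL, ZMod.natCast_self, ZMod.val_zero]
  · rw [hcast, ZMod.val_cast_of_lt (by omega)]

/-- The reflection of the `k`-th coordinate through the hyperplane midway between `a - 1` and
`a`. -/
def torusReflection (k : Fin d) (a : ZMod L) (x : Fin d → ZMod L) : Fin d → ZMod L :=
  Function.update x k (2 * a - 1 - x k)

/-- The half `{x | x k ∈ {a, a + 1, …, a + L / 2 - 1}}` of the torus, for `L` even. -/
def torusHalf (k : Fin d) (a : ZMod L) : Set (Fin d → ZMod L) :=
  {x | 2 * (x k - a).val < L}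

lemma torusReflection_apply_self_sub (k : Fin d) (a : ZMod L) (x : Fin d → ZMod L) :
    torusReflection k a x k - a = -1 - (x k - a) := by
  rw [torusReflection, Function.update_self]
  ring

lemma torusReflection_apply_of_ne {j k : Fin d} (hjk : j ≠ k) (a : ZMod L) (x : Fin d → ZMod L) :
    torusReflection k a x j = x j :=
  Function.update_of_ne hjk _ _

lemma torusReflection_update_self (k : Fin d) (a b : ZMod L) (x : Fin d → ZMod L) :
    torusReflection k a (Function.update x k b) =
      Function.update (torusReflection k a x) k (2 * a - 1 - b) := by
  simp only [torusReflection, Function.update_self, Function.update_idem]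

lemma torusReflection_update_of_ne {k l : Fin d} (hlk : l ≠ k) (a b : ZMod L)
    (x : Fin d → ZMod L) :
    torusReflection k a (Function.update x l b) =
      Function.update (torusReflection k a x) l b := by
  rw [torusReflection, Function.update_of_ne hlk.symm, Function.update_comm hlk, torusReflection]

lemma involutive_torusReflection (k : Fin d) (a : ZMod L) :
    Function.Involutive (torusReflection k a) := fun x => by
  simp only [torusReflection, Function.update_self, Function.update_idem, sub_sub_cancel,
    Function.update_eq_self]

lemma torusReflection_mem_torusHalf_iff [NeZero L] (hL : Even L) (k : Fin d) (a : ZMod L)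
    (x : Fin d → ZMod L) : torusReflection k a x ∈ torusHalf k a ↔ x ∉ torusHalf k a := by
  have hlt := ZMod.val_lt (x k - a)
  obtain ⟨m, rfl⟩ := hL
  rw [torusHalf, Set.mem_ofPred_eq, Set.mem_ofPred_eq, torusReflection_apply_self_sub,
    val_neg_one_sub]
  omega

lemma torusAdj_torusReflection (k : Fin d) (a : ZMod L) {x y : Fin d → ZMod L}
    (h : torusAdj d L x y) : torusAdj d L (torusReflection k a x) (torusReflection k a y) := by
  obtain ⟨l, hy⟩ := h
  refine ⟨l, ?_⟩
  by_cases hlk : l = k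
  · subst hlk
    have hself : torusReflection l a x l = 2 * a - 1 - x l := Function.update_self _ _ _
    rw [hself]
    rcases hy with rfl | rfl
    · exact .inr ((torusReflection_update_self l a _ x).trans (by congr 1; ring))
    · exact .inl ((torusReflection_update_self l a _ x).trans (by congr 1; ring))
  · rw [torusReflection_apply_of_ne hlk]
    exact hy.imp (fun hy => (congrArg _ hy).trans (torusReflection_update_of_ne hlk a _ x))
      fun hy => (congrArg _ hy).trans (torusReflection_update_of_ne hlk a _ x)

lemma eq_torusReflection_of_torusAdj [NeZero L] (hL : Even L) {k : Fin d} {a : ZMod L}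
    {x y : Fin d → ZMod L} (hx : x ∈ torusHalf k a) (hy : y ∉ torusHalf k a)
    (h : torusAdj d L x y) : y = torusReflection k a x := by
  obtain ⟨l, hyx⟩ := h
  obtain rfl : l = k := by
    by_contra hlk
    have hyk : y k = x k := by
      rcases hyx with rfl | rfl <;> exact Function.update_of_ne (Ne.symm hlk) _ _
    exact hy (by rwa [torusHalf, Set.mem_ofPred_eq, hyk])
  have heq (z : ZMod L) (hz : (z - a).val = L - 1 - (x l - a).val) :
      Function.update x l z = torusReflection l a x := by
    rw [← val_neg_one_sub] at hz
    rw [torusReflection]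
    congr 1
    linear_combination ZMod.val_injective L hz
  have hlt := ZMod.val_lt (x l - a)
  obtain ⟨m, rfl⟩ := hL
  simp only [torusHalf, Set.mem_ofPred_eq, not_lt] at hx hy
  rcases hyx with rfl | rfl
  · rw [Function.update_self] at hy
    refine heq _ ?_
    have hval := val_add_one_eq_ite (x l - a)
    rw [sub_add_eq_add_sub] at hval
    split_ifs at hval <;> omega
  · rw [Function.update_self] at hy
    refine heq _ ?_
    have hval := val_add_one_eq_ite (x l - 1 - a)
    rw [sub_add_eq_add_sub, sub_add_cancel] at hval
    split_ifs at hval <;> omega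

lemma isReflection_torusReflection [NeZero L] (hL : Even L) (k : Fin d) (a : ZMod L) :
    IsReflection (torusAdj d L) (torusReflection k a) (torusHalf k a) where
  involutive := involutive_torusReflection k a
  map_mem_iff := torusReflection_mem_torusHalf_iff hL k a
  map_rel_iff x y := by
    refine ⟨fun h => ?_, torusAdj_torusReflection k a⟩
    simpa only [involutive_torusReflection k a _] using torusAdj_torusReflection k a h
  eq_map_of_rel _ hx _ hy h := eq_torusReflection_of_torusAdj hL hx hy h

end Torus

section Chessboard

variable {d L : ℕ} [NeZero L] {K : Type*}

lemma exists_mem_forall_box_eq (hL : Even L) {M : Set ((Fin d → ZMod L) → K)}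
    (hM : ∀ σ ∈ M, ∀ k a, symmetrize (torusReflection k a) (torusHalf k a) σ ∈ M)
    {σ : (Fin d → ZMod L) → K} (hσ : σ ∈ M) (x₀ : Fin d → ZMod L) (s : Multiset (Fin d)) :
    ∃ τ ∈ M, ∃ x : Fin d → ZMod L, ∀ y, (∀ j, (y j - x j).val ≤ s.count j) → τ y = σ x₀ := by
  induction s using Multiset.induction with
  | empty =>
    refine ⟨σ, hσ, x₀, fun y hy => congrArg σ (funext fun j => ?_)⟩
    rw [← sub_eq_zero, ← ZMod.val_eq_zero, ← Nat.le_zero]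
    exact hy j
  | cons k s ih =>
    obtain ⟨τ, hτ, x, hx⟩ := ih
    -- Reflecting in the face of the box orthogonal to direction `k` adds the layer beyond it.
    refine ⟨_, hM τ hτ k (x k), Function.update x k (x k - 1), fun y hy => ?_⟩
    have hyj {j : Fin d} (hj : j ≠ k) : (y j - x j).val ≤ s.count j := by
      simpa only [Function.update_of_ne hj, Multiset.count_cons_of_ne hj] using hy j
    have hyk : (y k - x k + 1).val ≤ s.count k + 1 := by
      have := hy k
      rwa [Function.update_self, Multiset.count_cons_self, sub_sub_eq_add_sub,
        add_sub_right_comm] at this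
    have hlt := ZMod.val_lt (y k - x k)
    rw [val_add_one_eq_ite] at hyk
    by_cases hH : y ∈ torusHalf k (x k)
    · rw [symmetrize_of_mem hH]
      refine hx y fun j => ?_
      rcases eq_or_ne j k with rfl | hj
      · rw [torusHalf, Set.mem_ofPred_eq] at hH
        obtain ⟨m, rfl⟩ := hL
        split_ifs at hyk <;> omega
      · exact hyj hj
    · rw [symmetrize_of_notMem hH]
      refine hx _ fun j => ?_
      rcases eq_or_ne j k with rfl | hj
      · rw [torusHalf, Set.mem_ofPred_eq] at hH
        rw [torusReflection_apply_self_sub, val_neg_one_sub]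
        obtain ⟨m, rfl⟩ := hL
        split_ifs at hyk <;> omega
      · rw [torusReflection_apply_of_ne hj]
        exact hyj hj

lemma const_mem_of_symmetrize_mem (hL : Even L) {M : Set ((Fin d → ZMod L) → K)}
    (hM : ∀ σ ∈ M, ∀ k a, symmetrize (torusReflection k a) (torusHalf k a) σ ∈ M)
    {σ : (Fin d → ZMod L) → K} (hσ : σ ∈ M) (x : Fin d → ZMod L) : (fun _ => σ x) ∈ M := by
  obtain ⟨τ, hτ, x₁, hx₁⟩ :=
    exists_mem_forall_box_eq hL hM hσ x (L • (Finset.univ : Finset (Fin d)).val)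
  convert hτ using 1
  refine funext fun y => (hx₁ y fun j => ?_).symm
  rw [Multiset.count_nsmul, Multiset.count_univ, mul_one]
  exact (ZMod.val_lt _).le

theorem chessboard_estimate [Finite K] (hL : Even L) {Φ : ((Fin d → ZMod L) → K) → ℝ}
    (hΦ : ∀ σ, 0 ≤ Φ σ)
    (hRP : ∀ σ k a, Φ σ ^ 2 ≤ Φ (symmetrize (torusReflection k a) (torusHalf k a) σ) *
      Φ (symmetrize (torusReflection k a) (torusHalf k a)ᶜ σ))
    {c : K → ℝ} (hc : ∀ κ, 0 < c κ)
    (hconst : ∀ κ, Φ (fun _ => κ) ≤ c κ ^ Fintype.card (Fin d → ZMod L))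
    (σ : (Fin d → ZMod L) → K) : Φ σ ≤ ∏ x, c (σ x) := by
  have hprod (σ : (Fin d → ZMod L) → K) : 0 < ∏ x, c (σ x) := Finset.prod_pos fun x _ => hc (σ x)
  set F : ((Fin d → ZMod L) → K) → ℝ := fun σ => Φ σ / ∏ x, c (σ x) with hF
  have hF_nonneg (σ) : 0 ≤ F σ := div_nonneg (hΦ σ) (hprod σ).le
  have hF_sq (σ k a) : F σ ^ 2 ≤ F (symmetrize (torusReflection k a) (torusHalf k a) σ) *
      F (symmetrize (torusReflection k a) (torusHalf k a)ᶜ σ) := by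
    simp only [hF, comp_symmetrize c, div_mul_div_comm, div_pow,
      prod_symmetrize_mul_prod_symmetrize_compl (involutive_torusReflection k a)]
    exact div_le_div_of_nonneg_right (hRP σ k a) (sq_nonneg _)
  have : Nonempty ((Fin d → ZMod L) → K) := ⟨σ⟩
  obtain ⟨ρ, hρ⟩ := Finite.exists_max F
  have hmax : ∀ τ ∈ {τ | F τ = F ρ}, ∀ k a,
      symmetrize (torusReflection k a) (torusHalf k a) τ ∈ {τ | F τ = F ρ} := by
    intro τ hτ k a
    refine le_antisymm (hρ _) ?_
    rcases (hF_nonneg ρ).eq_or_lt with h0 | hpos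
    · exact h0 ▸ hF_nonneg _
    · have hsq := (hF_sq τ k a).trans (mul_le_mul_of_nonneg_left (hρ _) (hF_nonneg _))
      rw [show F τ = F ρ from hτ, sq] at hsq
      exact le_of_mul_le_mul_right hsq hpos
  have hρ_const : F (fun _ => ρ 0) = F ρ := const_mem_of_symmetrize_mem hL hmax rfl 0
  have hle_one : F ρ ≤ 1 := by
    rw [← hρ_const]
    refine (div_le_one (hprod _)).2 ((hconst _).trans_eq ?_)
    rw [Finset.prod_const, Finset.card_univ]
  exact (div_le_one (hprod σ)).1 ((hρ σ).trans hle_one)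

end Chessboard

section Potential

variable {V : ℝ → ℝ}

lemma add_le_map_add_of_convexOn (hV : ConvexOn ℝ (Set.Ici 0) V) (hV0 : V 0 ≤ 0) {a b : ℝ}
    (ha : 0 ≤ a) (hb : 0 ≤ b) : V a + V b ≤ V (a + b) := by
  rcases (add_nonneg ha hb).eq_or_lt with hab | hab
  · obtain rfl : a = 0 := by linarith
    obtain rfl : b = 0 := by linarith
    simpa using hV0
  · have hscale {x y : ℝ} (hx : 0 ≤ x) (hy : 0 ≤ y) (hxy : x + y = a + b) :
        V x ≤ x / (a + b) * V (a + b) := by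
      have hconv := hV.2 (Set.mem_Ici.2 hab.le) Set.self_mem_Ici (div_nonneg hx hab.le)
        (div_nonneg hy hab.le) (by rw [← add_div, hxy, div_self hab.ne'])
      rw [smul_zero, add_zero, smul_eq_mul, div_mul_cancel₀ _ hab.ne'] at hconv
      exact hconv.trans
        (add_le_of_nonpos_right (mul_nonpos_of_nonneg_of_nonpos (div_nonneg hy hab.le) hV0))
    calc V a + V b ≤ a / (a + b) * V (a + b) + b / (a + b) * V (a + b) :=
          add_le_add (hscale ha hb rfl) (hscale hb ha (add_comm b a))
      _ = V (a + b) := by rw [← add_mul, ← add_div, div_self hab.ne', one_mul]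

lemma exists_pos_of_even_of_convexOn (hVeven : ∀ x, V (-x) = V x)
    (hV : ConvexOn ℝ Set.univ V) (hVne : V ≠ 0) (hV0 : V 0 = 0) : ∃ x, 0 ≤ x ∧ 0 < V x := by
  obtain ⟨x, hx⟩ := Function.ne_iff.1 hVne
  have hnonneg : 0 ≤ V x := by
    have hmid := hV.2 (Set.mem_univ x) (Set.mem_univ (-x)) (one_half_pos (α := ℝ)).le
      (one_half_pos (α := ℝ)).le (add_halves 1)
    rw [smul_neg, add_neg_cancel, hV0, hVeven, ← add_smul, add_halves, one_smul] at hmid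
    exact hmid
  have hpos : 0 < V x := hnonneg.lt_of_ne' hx
  rcases le_total 0 x with h0 | h0
  · exact ⟨x, h0, hpos⟩
  · exact ⟨-x, neg_nonneg.2 h0, (hVeven x).symm ▸ hpos⟩

lemma exists_le_map_of_superadditive (hV : ∀ a b, 0 ≤ a → 0 ≤ b → V a + V b ≤ V (a + b))
    (hpos : ∃ x, 0 ≤ x ∧ 0 < V x) (y : ℝ) : ∃ x, 0 ≤ x ∧ y ≤ V x := by
  obtain ⟨x, hx, hVx⟩ := hpos
  have hmul (n : ℕ) : (n + 1) * V x ≤ V ((n + 1) * x) := by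
    induction n with
    | zero => simp
    | succ n ih =>
      have := hV ((n + 1) * x) x (by positivity) hx
      push_cast
      rw [add_one_mul (n + 1 : ℝ) (V x), add_one_mul (n + 1 : ℝ) x]
      linarith
  obtain ⟨n, hn⟩ := exists_nat_ge (y / V x)
  refine ⟨(n + 1) * x, by positivity, le_trans ?_ (hmul n)⟩
  rw [div_le_iff₀ hVx] at hn
  linarith

lemma Vinv_nonneg (V : ℝ → ℝ) (y : ℝ) : 0 ≤ Vinv V y :=
  Real.sInf_nonneg fun _ hx => hx.1

lemma le_map_Vinv (hV : ContinuousOn V (Set.Ici 0)) {y : ℝ} (hy : ∃ x, 0 ≤ x ∧ y ≤ V x) :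
    y ≤ V (Vinv V y) := by
  have hclosed : IsClosed {x : ℝ | 0 ≤ x ∧ y ≤ V x} :=
    hV.preimage_isClosed_of_isClosed isClosed_Ici isClosed_Ici
  exact (hclosed.csInf_mem hy ⟨0, fun _ hx => hx.1⟩).2

end Potential

section Gibbs

variable {d L : ℕ} [NeZero L] {lam : ℝ} {V : ℝ → ℝ}

/-- The single-site Boltzmann weight of the potential, including the hard wall `t ≥ 0`. -/
noncomputable def siteWeight (lam : ℝ) (V : ℝ → ℝ) : ℝ → ℝ≥0∞ :=
  (Set.Ici 0).indicator fun t => ENNReal.ofReal (Real.exp (-lam * V t))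

lemma measurable_siteWeight (lam : ℝ) (hV : ContinuousOn V (Set.Ici 0)) :
    Measurable (siteWeight lam V) := by
  have hcont : ContinuousOn (fun t => ENNReal.ofReal (Real.exp (-lam * V t))) (Set.Ici 0) :=
    ENNReal.continuous_ofReal.comp_continuousOn
      (Real.continuous_exp.comp_continuousOn (hV.const_smul (-lam)))
  rw [siteWeight, ← Set.piecewise_eq_indicator]
  exact hcont.measurable_piecewise continuousOn_const measurableSet_Ici

lemma siteWeight_add_le (hlam : 0 ≤ lam)
    (hV : ∀ a b, 0 ≤ a → 0 ≤ b → V a + V b ≤ V (a + b)) {t h : ℝ} (ht : 0 ≤ t) (hh : 0 ≤ h) :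
    siteWeight lam V (t + h) ≤ ENNReal.ofReal (Real.exp (-lam * V h)) * siteWeight lam V t := by
  rw [siteWeight, Set.indicator_of_mem (Set.mem_Ici.2 (add_nonneg ht hh)),
    Set.indicator_of_mem (Set.mem_Ici.2 ht), ← ENNReal.ofReal_mul (Real.exp_nonneg _),
    ← Real.exp_add, neg_mul, neg_mul, neg_mul, ← neg_add, ← mul_add]
  gcongr
  rw [add_comm (V h)]
  exact hV t h ht hh

lemma siteDensity_add_const_le {T : Type*} [Fintype T] (r : T → T → Prop) (c : ℝ≥0)
    (hlam : 0 ≤ lam) (hV : ∀ a b, 0 ≤ a → 0 ≤ b → V a + V b ≤ V (a + b)) {h : ℝ} (hh : 0 ≤ h)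
    {φ : T → ℝ} (hφ : ∀ x, 0 ≤ φ x) :
    siteDensity r c (fun _ => siteWeight lam V) (φ + fun _ => h) ≤
      ENNReal.ofReal (Real.exp (-lam * V h)) ^ Fintype.card T *
        siteDensity r c (fun _ => siteWeight lam V) φ := by
  rw [siteDensity, siteDensity, dirichletEnergy_add_const, ← mul_assoc, ← Finset.card_univ,
    ← Finset.prod_const, ← Finset.prod_mul_distrib]
  gcongr with x
  exact siteWeight_add_le hlam hV (hφ x) hh

instance sigmaFinite_volume_add_dirac (η : ℝ) :
    SigmaFinite ((volume : Measure ℝ) + ENNReal.ofReal η • Measure.dirac 0) :=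
  have : IsFiniteMeasure (ENNReal.ofReal η • Measure.dirac (0 : ℝ)) :=
    Measure.smul_finite _ ENNReal.ofReal_ne_top
  inferInstance

lemma ofReal_densPer (lam : ℝ) (V : ℝ → ℝ) (φ : (Fin d → ZMod L) → ℝ) :
    ENNReal.ofReal (densPer d L lam V φ) =
      siteDensity (torusAdj d L) (1 / (8 * d)) (fun _ => siteWeight lam V) φ := by
  rw [densPer, siteDensity]
  split_ifs with hφ
  · simp only [siteWeight, Set.indicator_of_mem (Set.mem_Ici.2 (hφ _))]
    rw [← ENNReal.ofReal_prod_of_nonneg fun _ _ => Real.exp_nonneg _, ← Real.exp_sum,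
      ← ENNReal.ofReal_mul (Real.exp_nonneg _), ← Real.exp_add, ← Finset.mul_sum, HamPer,
      dirichletEnergy]
    push_cast
    ring_nf
  · obtain ⟨x, hx⟩ := not_forall.1 hφ
    have hzero : siteWeight lam V (φ x) = 0 := Set.indicator_of_notMem hx _
    rw [ENNReal.ofReal_zero, Finset.prod_eq_zero (Finset.mem_univ x) hzero, zero_mul]

lemma gibbsPer_pi (lam η : ℝ) (V : ℝ → ℝ) {B : (Fin d → ZMod L) → Set ℝ}
    (hB : ∀ x, MeasurableSet (B x)) :
    gibbsPer d L lam η V (Set.univ.pi B) =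
      siteIntegral (torusAdj d L) (1 / (8 * d)) (volume + ENNReal.ofReal η • Measure.dirac 0)
        fun x => (B x).indicator (siteWeight lam V) := by
  rw [gibbsPer, withDensity_apply _ (.univ_pi hB), ← lintegral_indicator (.univ_pi hB),
    siteIntegral, priorPer]
  simp only [ofReal_densPer, siteDensity_indicator]

theorem sq_gibbsPer_pi_le (hL : Even L) (η : ℝ) (hw : Measurable (siteWeight lam V))
    {B : (Fin d → ZMod L) → Set ℝ} (hB : ∀ x, MeasurableSet (B x)) (k : Fin d) (a : ZMod L) :
    gibbsPer d L lam η V (Set.univ.pi B) ^ 2 ≤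
      gibbsPer d L lam η V (Set.univ.pi (symmetrize (torusReflection k a) (torusHalf k a) B)) *
        gibbsPer d L lam η V
          (Set.univ.pi (symmetrize (torusReflection k a) (torusHalf k a)ᶜ B)) := by
  have hsymm (H : Set (Fin d → ZMod L)) (x : Fin d → ZMod L) :
      MeasurableSet (symmetrize (torusReflection k a) H B x) := by
    unfold symmetrize Set.piecewise
    split_ifs
    exacts [hB x, hB _]
  rw [gibbsPer_pi lam η V hB, gibbsPer_pi lam η V (hsymm _), gibbsPer_pi lam η V (hsymm _)]
  simp only [comp_symmetrize fun B : Set ℝ => B.indicator (siteWeight lam V)]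
  exact (isReflection_torusReflection hL k a).sq_siteIntegral_le _ _ fun x => hw.indicator (hB x)

lemma muPer_univ_le_one (d L : ℕ) [NeZero L] (lam η : ℝ) (V : ℝ → ℝ) :
    muPer d L lam η V Set.univ ≤ 1 := by
  rw [muPer, Measure.smul_apply, smul_eq_mul]
  exact ENNReal.inv_mul_le_one _

instance isFiniteMeasure_muPer (d L : ℕ) [NeZero L] (lam η : ℝ) (V : ℝ → ℝ) :
    IsFiniteMeasure (muPer d L lam η V) :=
  ⟨(muPer_univ_le_one d L lam η V).trans_lt ENNReal.one_lt_top⟩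

lemma sq_muPer_pi_le (hL : Even L) (η : ℝ) (hw : Measurable (siteWeight lam V))
    {B : (Fin d → ZMod L) → Set ℝ} (hB : ∀ x, MeasurableSet (B x)) (k : Fin d) (a : ZMod L) :
    muPer d L lam η V (Set.univ.pi B) ^ 2 ≤
      muPer d L lam η V (Set.univ.pi (symmetrize (torusReflection k a) (torusHalf k a) B)) *
        muPer d L lam η V
          (Set.univ.pi (symmetrize (torusReflection k a) (torusHalf k a)ᶜ B)) := by
  simp only [muPer, Measure.smul_apply, smul_eq_mul]
  rw [mul_mul_mul_comm, mul_pow, ← sq]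
  gcongr
  exact sq_gibbsPer_pi_le hL η hw hB k a

theorem muPer_pi_le_prod {K : Type*} [Finite K] (hL : Even L) (η : ℝ)
    (hw : Measurable (siteWeight lam V)) {B : K → Set ℝ} (hB : ∀ κ, MeasurableSet (B κ))
    {c : K → ℝ} (hc : ∀ κ, 0 < c κ)
    (hconst : ∀ κ, muPer d L lam η V (Set.univ.pi fun _ => B κ) ≤
      ENNReal.ofReal (c κ) ^ Fintype.card (Fin d → ZMod L))
    (σ : (Fin d → ZMod L) → K) :
    (muPer d L lam η V (Set.univ.pi fun x => B (σ x))).toReal ≤ ∏ x, c (σ x) := by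
  refine chessboard_estimate hL
    (Φ := fun σ => (muPer d L lam η V (Set.univ.pi fun x => B (σ x))).toReal)
    (fun _ => ENNReal.toReal_nonneg) (fun σ k a => ?_) hc (fun κ => ?_) σ
  · simp only [← ENNReal.toReal_pow, ← ENNReal.toReal_mul, comp_symmetrize B]
    exact ENNReal.toReal_mono (by finiteness)
      (sq_muPer_pi_le hL η hw (fun x => hB (σ x)) k a)
  · exact ENNReal.toReal_le_of_le_ofReal (pow_pos (hc κ) _).le
      ((hconst κ).trans_eq (ENNReal.ofReal_pow (hc κ).le _).symm)

lemma restrict_priorPer_pi_Ioi (d L : ℕ) [NeZero L] (η : ℝ) {h : ℝ} (hh : 0 ≤ h) :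
    (priorPer d L η).restrict (Set.univ.pi fun _ => Set.Ioi h) =
      volume.restrict (Set.univ.pi fun _ => Set.Ioi h) := by
  rw [priorPer, volume_pi, Measure.restrict_pi_pi, Measure.restrict_pi_pi]
  simp only [Measure.restrict_add, Measure.restrict_smul, restrict_dirac' measurableSet_Ioi,
    Set.mem_Ioi, hh.not_gt, if_false, smul_zero, add_zero]

lemma gibbsPer_pi_Ioi_le (d L : ℕ) [NeZero L] (hlam : 0 ≤ lam) (η : ℝ)
    (hV : ∀ a b, 0 ≤ a → 0 ≤ b → V a + V b ≤ V (a + b)) {h : ℝ} (hh : 0 ≤ h) :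
    gibbsPer d L lam η V (Set.univ.pi fun _ => Set.Ioi h) ≤
      ENNReal.ofReal (Real.exp (-lam * V h)) ^ Fintype.card (Fin d → ZMod L) *
        gibbsPer d L lam η V Set.univ := by
  set C := ENNReal.ofReal (Real.exp (-lam * V h)) ^ Fintype.card (Fin d → ZMod L)
  set w : ((Fin d → ZMod L) → ℝ) → ℝ≥0∞ :=
    siteDensity (torusAdj d L) (1 / (8 * d)) fun _ => siteWeight lam V
  let above (t : ℝ) : Set ((Fin d → ZMod L) → ℝ) := Set.univ.pi fun _ => Set.Ioi t
  have habove (t : ℝ) : MeasurableSet (above t) := .univ_pi fun _ => measurableSet_Ioi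
  have hgibbs {t : ℝ} (ht : 0 ≤ t) :
      gibbsPer d L lam η V (above t) = ∫⁻ φ in above t, w φ := by
    rw [gibbsPer, withDensity_apply _ (habove t), restrict_priorPer_pi_Ioi d L η ht]
    simp only [ofReal_densPer, w, above]
  have hpreimage : (· + fun _ => h) ⁻¹' above h = above 0 := by
    ext φ
    simp [above]
  have hraise : MeasurePreserving (MeasurableEquiv.addRight fun _ : Fin d → ZMod L => h) :=
    measurePreserving_add_right volume _
  calc gibbsPer d L lam η V (above h)
    _ = ∫⁻ φ in above 0, w (φ + fun _ => h) := by
        rw [hgibbs hh, ← hraise.setLIntegral_comp_preimage_emb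
          (MeasurableEquiv.measurableEmbedding _), MeasurableEquiv.coe_addRight, hpreimage]
    _ ≤ ∫⁻ φ in above 0, C * w φ :=
        setLIntegral_mono' (habove 0) fun φ hφ =>
          siteDensity_add_const_le _ _ hlam hV hh fun x => (hφ x trivial).le
    _ = C * gibbsPer d L lam η V (above 0) := by
        rw [lintegral_const_mul' _ _ (by finiteness), hgibbs le_rfl]
    _ ≤ C * gibbsPer d L lam η V Set.univ := by
        gcongr
        exact Set.subset_univ _

lemma muPer_pi_Ioi_le (d L : ℕ) [NeZero L] (hlam : 0 ≤ lam) (η : ℝ)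
    (hV : ∀ a b, 0 ≤ a → 0 ≤ b → V a + V b ≤ V (a + b)) {h : ℝ} (hh : 0 ≤ h) :
    muPer d L lam η V (Set.univ.pi fun _ => Set.Ioi h) ≤
      ENNReal.ofReal (Real.exp (-lam * V h)) ^ Fintype.card (Fin d → ZMod L) := by
  have hZ := muPer_univ_le_one d L lam η V
  rw [muPer, Measure.smul_apply, smul_eq_mul] at hZ ⊢
  refine (mul_le_mul_right (gibbsPer_pi_Ioi_le d L hlam η hV hh) _).trans ?_
  rw [mul_left_comm]
  exact mul_le_of_le_one_right' hZ

theorem muPer_lt_apply_le (hL : Even L) (hlam : 0 ≤ lam) (η : ℝ)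
    (hVc : ContinuousOn V (Set.Ici 0))
    (hV : ∀ a b, 0 ≤ a → 0 ≤ b → V a + V b ≤ V (a + b)) {h : ℝ} (hh : 0 ≤ h)
    (i : Fin d → ZMod L) :
    (muPer d L lam η V {φ | h < φ i}).toReal ≤ Real.exp (-lam * V h) := by
  let B (p : Prop) : Set ℝ := if p then Set.Ioi h else Set.univ
  let c (p : Prop) : ℝ := if p then Real.exp (-lam * V h) else 1
  have hset : {φ | h < φ i} = Set.univ.pi fun x => B (x = i) := by
    ext φ
    rw [Set.mem_univ_pi]
    refine ⟨fun hφ x => ?_, fun hφ => by simpa [B] using hφ i⟩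
    simp only [B]
    split_ifs with hx
    exacts [hx ▸ hφ, trivial]
  have hprod : ∏ x, c (x = i) = Real.exp (-lam * V h) :=
    (Fintype.prod_eq_single i fun x hx => if_neg hx).trans (if_pos rfl)
  rw [hset, ← hprod]
  refine muPer_pi_le_prod hL η (measurable_siteWeight lam hVc) (B := B) (fun p => ?_)
    (fun p => ?_) (fun p => ?_) fun x => x = i
  · exact .ite' (fun _ => measurableSet_Ioi) fun _ => .univ
  · simp only [c]
    split_ifs <;> positivity
  · by_cases hp : p
    · simpa only [B, c, if_pos hp] using muPer_pi_Ioi_le d L hlam η hV hh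
    · simpa only [B, c, if_neg hp, Set.pi_univ, ENNReal.ofReal_one, one_pow]
        using muPer_univ_le_one d L lam η V

end Gibbs

theorem muPer_one_site_large_height_general (d : ℕ) (V : ℝ → ℝ)
    (hVc : ContinuousOn V (Set.Ici 0))
    (hVadd : ∀ a b, 0 ≤ a → 0 ≤ b → V a + V b ≤ V (a + b)) (hVpos : ∃ x, 0 ≤ x ∧ 0 < V x)
    (lam : ℝ) (hlam : 0 < lam) (η : ℝ) (hη : 0 ≤ η) (L : ℕ) [NeZero L] (hLeven : Even L)
    (i : Fin d → ZMod L) :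
    (muPer d L lam η V {φ | Vinv V (2 * d / lam * Real.log L) < φ i}).toReal ≤
      ((L : ℝ) ^ (2 * d))⁻¹ := by
  have hL : (0 : ℝ) < L := Nat.cast_pos.2 (NeZero.pos L)
  have hVinv : 2 * d / lam * Real.log L ≤ V (Vinv V (2 * d / lam * Real.log L)) :=
    le_map_Vinv hVc (exists_le_map_of_superadditive hVadd hVpos _)
  calc (muPer d L lam η V {φ | Vinv V (2 * d / lam * Real.log L) < φ i}).toReal
    _ ≤ Real.exp (-lam * V (Vinv V (2 * d / lam * Real.log L))) :=
        muPer_lt_apply_le hLeven hlam.le η hVc hVadd (Vinv_nonneg V _) i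
    _ ≤ Real.exp (-lam * (2 * d / lam * Real.log L)) :=
        Real.exp_le_exp.2 (mul_le_mul_of_nonpos_left hVinv (neg_nonpos.2 hlam.le))
    _ = ((L : ℝ) ^ (2 * d))⁻¹ := by
        rw [← Real.exp_log (pow_pos hL (2 * d)), ← Real.exp_neg, Real.log_pow]
        field_simp
        push_cast
        ring_nf

/-- Chessboard one-site estimate: for `d ≥ 2`, `λ > 0`, `η ≥ 0` and `L` even, for every
`i ∈ T_L^d`, `μ^{+,per}_{L;λ,η}(φ_i > V^{-1}((2d/λ) log L)) ≤ L^{-2d}`. -/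
theorem muPer_one_site_large_height
    (d : ℕ) (hd : 2 ≤ d)
    (V : ℝ → ℝ) (hVeven : ∀ x, V (-x) = V x) (hVconvex : ConvexOn ℝ Set.univ V)
    (hVne : V ≠ 0) (hV0 : V 0 = 0)
    (lam : ℝ) (hlam : 0 < lam) (η : ℝ) (hη : 0 ≤ η)
    (L : ℕ) (hL : 0 < L) (hLeven : Even L) :
    ∀ i : Fin d → ZMod L,
      (@muPer d L ⟨hL.ne'⟩ lam η V
          {φ | Vinv V (2 * d / lam * Real.log L) < φ i}).toReal ≤
        ((L : ℝ) ^ (2 * d))⁻¹ := by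
  have : NeZero L := ⟨hL.ne'⟩
  have hadd (a b : ℝ) : 0 ≤ a → 0 ≤ b → V a + V b ≤ V (a + b) :=
    add_le_map_add_of_convexOn (hVconvex.subset (Set.subset_univ _) (convex_Ici 0)) hV0.le
  exact muPer_one_site_large_height_general d V
    ((hVconvex.continuousOn isOpen_univ).mono (Set.subset_univ _)) hadd
    (exists_pos_of_even_of_convexOn hVeven hVconvex hVne hV0) lam hlam η hη L hLeven
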